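/- The map (a,b) ↦ s̄(a,b) is of class C¹ on the set {(a,b) : 0 < a < 1, a < b ≤ 1}, and the map b ↦ s̄(0,b) is of class C¹ on (0,1]. -/

import Mathlib

/-!
For suitable coefficients, `ξ_{[a,b]}` and `ζ_{[a,b]}` are nonzero multiples of two solutions
`P = p ζ - q ξ` and `Q = p' ζ - q' ξ` of `ℒu = 0`: one takes `(p', q') = (ξ'(b), ζ'(b))`, and
`(p, q) = (ξ'(a), ζ'(a))` if `a > 0`, `(p, q) = (0, -1)` if `a = 0`. The reflection law therefore
says `F(p, q, p', q', s) := P'(s) Q(s) + P(s) Q'(s) = 0`. The function `F` is polynomial in the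
coefficients and `C¹` in `s ∈ (0,1)`, so the implicit function theorem applies on an *open* set of
parameters. The boundary value `b = 1` enters only through the coefficients `ξ'(b)`, `ζ'(b)`, which
are `C¹` on `(0,1]`.

Nondegeneracy: the equation gives `∂F/∂s = 2 (P Q + P' Q') = 2 Q (P² - P'²) / P` on the zero
set of `F`. The energy `P'² - P²` is nonincreasing, as its derivative is `-2 (N-1)/r P'²`, and it
equals `-P(a)² < 0` at `a`, where `P' = 0`. Hence `P'² < P²` (`energy_neg`). The local solution
supplied by the implicit function theorem lies in `(a,b)` and solves the reflection law, so it
coincides with `s̄` by uniqueness (`contDiffWithinAt_of_reflF`).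

The remaining points are that `ξ' > 0` and `ζ' < 0` (both `r^{N-1} ξ'` and `r^{N-1} ζ'` are strictly
increasing), and that the two-sided derivatives `deriv ξ`, `deriv ζ` agree at `r = 1` with the
one-sided ones, which the Wronskian identity forces.
-/

open Real Set Filter Topology

/-- Context: the two fundamental solutions `ξ`, `ζ` of `ℒu = -u'' - ((N-1)/r) u' + u = 0`
on `(0,1)` together with their basic properties (Proposition 2.1 of the paper). -/
structure GreenData (N : ℕ) where
  xi : ℝ → ℝ
  zeta : ℝ → ℝ
  xi_smooth : ContDiffOn ℝ 2 xi (Set.Icc 0 1)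
  zeta_smooth : ContDiffOn ℝ 2 zeta (Set.Ioc 0 1)
  xi_pos : ∀ r ∈ Set.Icc (0:ℝ) 1, 0 < xi r
  zeta_pos : ∀ r ∈ Set.Ioc (0:ℝ) 1, 0 < zeta r
  xi_ode : ∀ r ∈ Set.Ioo (0:ℝ) 1,
    -(deriv (deriv xi) r) - ((N : ℝ) - 1) / r * deriv xi r + xi r = 0
  zeta_ode : ∀ r ∈ Set.Ioo (0:ℝ) 1,
    -(deriv (deriv zeta) r) - ((N : ℝ) - 1) / r * deriv zeta r + zeta r = 0
  xi_deriv_zero : deriv xi 0 = 0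
  zeta_deriv_one : deriv zeta 1 = 0
  xi_mono : StrictMonoOn xi (Set.Icc 0 1)
  xi_bdd : ∃ M : ℝ, ∀ r ∈ Set.Icc (0:ℝ) 1, xi r ≤ M
  zeta_anti : StrictAntiOn zeta (Set.Ioc 0 1)
  wronskian : ∀ r ∈ Set.Ioc (0:ℝ) 1,
    r ^ (N - 1) * (deriv xi r * zeta r - xi r * deriv zeta r) = 1
  xi_lim : Filter.Tendsto xi (nhdsWithin 0 (Set.Ioi 0)) (nhds (1 / ((N : ℝ) - 2)))
  zeta_lim : Filter.Tendsto (fun r => r ^ (N - 2) * zeta r)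
    (nhdsWithin 0 (Set.Ioi 0)) (nhds 1)
  zeta_deriv_lim : Filter.Tendsto (fun r => r ^ (N - 1) * deriv zeta r)
    (nhdsWithin 0 (Set.Ioi 0)) (nhds (-((N : ℝ) - 2)))

namespace GreenData

variable {N : ℕ}

/-- The function `ξ_{[a,b]}` of the paper. -/
noncomputable def xiI (d : GreenData N) (a b : ℝ) : ℝ → ℝ :=
  if a = 0 then
    (if b = 1 then d.xi else fun r => d.xi r / deriv d.xi b)
  else if b = 1 then
    fun r => deriv d.xi a * d.zeta r - d.xi r * deriv d.zeta a
  else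
    fun r => (deriv d.xi a * d.zeta r - d.xi r * deriv d.zeta a) /
      Real.sqrt (deriv d.xi a * deriv d.zeta b - deriv d.xi b * deriv d.zeta a)

/-- The function `ζ_{[a,b]}` of the paper. -/
noncomputable def zetaI (d : GreenData N) (a b : ℝ) : ℝ → ℝ :=
  if a = 0 then
    (if b = 1 then d.zeta
     else fun r => deriv d.xi b * d.zeta r - d.xi r * deriv d.zeta b)
  else if b = 1 then
    fun r => -(d.zeta r / deriv d.zeta a)
  else
    fun r => (deriv d.xi b * d.zeta r - d.xi r * deriv d.zeta b) /
      Real.sqrt (deriv d.xi a * deriv d.zeta b - deriv d.xi b * deriv d.zeta a)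

/-- The reflection law `ξ'_{[a,b]}(s)/ξ_{[a,b]}(s) + ζ'_{[a,b]}(s)/ζ_{[a,b]}(s) = 0`. -/
def ReflectionAt (d : GreenData N) (a b s : ℝ) : Prop :=
  deriv (d.xiI a b) s / d.xiI a b s + deriv (d.zetaI a b) s / d.zetaI a b s = 0

/-- The Green function `G_{[a,b]}(r,s)`. -/
noncomputable def G (d : GreenData N) (a b r s : ℝ) : ℝ :=
  if r ≤ s then s ^ (N - 1) * d.xiI a b r * d.zetaI a b s
  else s ^ (N - 1) * d.xiI a b s * d.zetaI a b r

end GreenData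

/-- `sbar` is the function associating to `0 ≤ a < b ≤ 1` the unique point
`s̄(a,b) ∈ (a,b)` satisfying the reflection law. -/
def IsSBar {N : ℕ} (d : GreenData N) (sbar : ℝ → ℝ → ℝ) : Prop :=
  ∀ a b : ℝ, 0 ≤ a → a < b → b ≤ 1 →
    sbar a b ∈ Set.Ioo a b ∧ d.ReflectionAt a b (sbar a b) ∧
    ∀ s ∈ Set.Ioo a b, d.ReflectionAt a b s → s = sbar a b

/-- The map `M_∞^{(j)}` of the paper, with `α_j = s̄(β_{j-1},β_j)`. -/
noncomputable def Minf {N : ℕ} (d : GreenData N) (sbar : ℝ → ℝ → ℝ)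
    (β : ℕ → ℝ) (j : ℕ) : ℝ :=
  (1 / (β j) ^ (N - 1)) *
    (1 / (deriv d.xi (β j) * d.zeta (sbar (β j) (β (j + 1))) -
            d.xi (sbar (β j) (β (j + 1))) * deriv d.zeta (β j)) -
     1 / (deriv d.xi (β j) * d.zeta (sbar (β (j - 1)) (β j)) -
            d.xi (sbar (β (j - 1)) (β j)) * deriv d.zeta (β j)))

/-- Extension of a `(k-1)`-tuple `(β₁,…,β_{k-1})` by the conventions `β₀ = 0`, `β_k = 1`. -/
noncomputable def extendB (k : ℕ) (β : Fin (k - 1) → ℝ) : ℕ → ℝ := fun j =>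
  if hj : 1 ≤ j ∧ j ≤ k - 1 then β ⟨j - 1, by omega⟩
  else if j = 0 then 0 else 1

/-- The open simplex `T = {0 = β₀ < β₁ < ⋯ < β_{k-1} < β_k = 1}` as a subset of `ℝ^{k-1}`. -/
def TSet (k : ℕ) : Set (Fin (k - 1) → ℝ) :=
  {β | ∀ j < k, extendB k β j < extendB k β (j + 1)}


namespace GreenData

variable {N : ℕ}

/-! ### One-sided and two-sided derivatives -/

lemma deriv_xi_one_mul (d : GreenData N) : deriv d.xi 1 * d.zeta 1 = 1 := by
  have h := d.wronskian 1 (by simp)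
  rw [d.zeta_deriv_one] at h
  simpa using h

lemma derivWithin_xi_eq (d : GreenData N) {r : ℝ} (hr : r ∈ Ioc (0:ℝ) 1) :
    derivWithin d.xi (Icc 0 1) r = deriv d.xi r := by
  have hd : DifferentiableAt ℝ d.xi r := by
    rcases hr.2.lt_or_eq with h | rfl
    · exact (d.xi_smooth.differentiableOn (by norm_num) r ⟨hr.1.le, hr.2⟩).differentiableAt
        (Icc_mem_nhds hr.1 h)
    · -- the derivative at `1` is nonzero, so it is not a junk value
      apply differentiableAt_of_deriv_ne_zero
      intro h0
      have := d.deriv_xi_one_mul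
      simp [h0] at this
  exact hd.derivWithin (uniqueDiffOn_Icc zero_lt_one r ⟨hr.1.le, hr.2⟩)

lemma contDiffOn_derivWithin_xi (d : GreenData N) :
    ContDiffOn ℝ 1 (derivWithin d.xi (Icc 0 1)) (Icc 0 1) :=
  d.xi_smooth.derivWithin (uniqueDiffOn_Icc zero_lt_one) (by norm_num)

lemma contDiffOn_deriv_xi (d : GreenData N) : ContDiffOn ℝ 1 (deriv d.xi) (Ioc 0 1) :=
  (d.contDiffOn_derivWithin_xi.mono Ioc_subset_Icc_self).congr
    fun _ hr => (d.derivWithin_xi_eq hr).symm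

lemma contDiffOn_derivWithin_zeta (d : GreenData N) :
    ContDiffOn ℝ 1 (derivWithin d.zeta (Ioc 0 1)) (Ioc 0 1) :=
  d.zeta_smooth.derivWithin (uniqueDiffOn_Ioc 0 1) (by norm_num)

/-- At `r = 1` the function `ζ` need not be differentiable from the right; the one-sided derivative
vanishes there because the Wronskian identity extends to `r = 1` by continuity. -/
lemma derivWithin_zeta_eq (d : GreenData N) {r : ℝ} (hr : r ∈ Ioc (0:ℝ) 1) :
    derivWithin d.zeta (Ioc 0 1) r = deriv d.zeta r := by
  have key : ∀ t ∈ Ioo (0:ℝ) 1, derivWithin d.zeta (Ioc 0 1) t = deriv d.zeta t := fun t ht =>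
    derivWithin_of_mem_nhds (Ioc_mem_nhds ht.1 ht.2)
  rcases hr.2.lt_or_eq with h | rfl
  · exact key r ⟨hr.1, h⟩
  · rw [d.zeta_deriv_one]
    have hc : ContinuousOn (fun t => t ^ (N - 1) * (derivWithin d.xi (Icc 0 1) t * d.zeta t
        - d.xi t * derivWithin d.zeta (Ioc 0 1) t)) (Ioc (0:ℝ) 1) :=
      (continuous_pow _).continuousOn.mul
        (((d.contDiffOn_derivWithin_xi.continuousOn.mono Ioc_subset_Icc_self).mul
          d.zeta_smooth.continuousOn).sub
          ((d.xi_smooth.continuousOn.mono Ioc_subset_Icc_self).mul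
            d.contDiffOn_derivWithin_zeta.continuousOn))
    have hlim := ((hc 1 hr).mono Ioo_subset_Ioc_self).tendsto
    have hone : Tendsto (fun t => t ^ (N - 1) * (derivWithin d.xi (Icc 0 1) t * d.zeta t
        - d.xi t * derivWithin d.zeta (Ioc 0 1) t)) (𝓝[Ioo (0:ℝ) 1] 1) (𝓝 1) := by
      apply tendsto_const_nhds.congr'
      filter_upwards [self_mem_nhdsWithin] with t ht
      rw [key t ht, d.derivWithin_xi_eq ⟨ht.1, ht.2.le⟩, d.wronskian t ⟨ht.1, ht.2.le⟩]
    have : (𝓝[Ioo (0:ℝ) 1] 1).NeBot := by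
      rw [← mem_closure_iff_nhdsWithin_neBot, closure_Ioo (by norm_num)]
      simp
    have h1 := tendsto_nhds_unique hlim hone
    rw [d.derivWithin_xi_eq hr, d.deriv_xi_one_mul] at h1
    have hx := (d.xi_pos 1 (by simp)).ne'
    have h2 : d.xi 1 * derivWithin d.zeta (Ioc 0 1) 1 = 0 := by
      simp only [one_pow, one_mul] at h1
      linarith
    exact (mul_eq_zero.1 h2).resolve_left hx

lemma contDiffOn_deriv_zeta (d : GreenData N) : ContDiffOn ℝ 1 (deriv d.zeta) (Ioc 0 1) :=
  d.contDiffOn_derivWithin_zeta.congr fun _ hr => (d.derivWithin_zeta_eq hr).symm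

lemma hasDerivAt_xi (d : GreenData N) {r : ℝ} (hr : r ∈ Ioo (0:ℝ) 1) :
    HasDerivAt d.xi (deriv d.xi r) r :=
  ((d.xi_smooth.differentiableOn (by norm_num) r ⟨hr.1.le, hr.2.le⟩).differentiableAt
    (Icc_mem_nhds hr.1 hr.2)).hasDerivAt

lemma hasDerivAt_zeta (d : GreenData N) {r : ℝ} (hr : r ∈ Ioo (0:ℝ) 1) :
    HasDerivAt d.zeta (deriv d.zeta r) r :=
  ((d.zeta_smooth.differentiableOn (by norm_num) r ⟨hr.1, hr.2.le⟩).differentiableAt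
    (Ioc_mem_nhds hr.1 hr.2)).hasDerivAt

lemma hasDerivAt_deriv_xi (d : GreenData N) {r : ℝ} (hr : r ∈ Ioo (0:ℝ) 1) :
    HasDerivAt (deriv d.xi) (d.xi r - ((N : ℝ) - 1) / r * deriv d.xi r) r := by
  have h := ((d.contDiffOn_deriv_xi.differentiableOn (by norm_num) r
    ⟨hr.1, hr.2.le⟩).differentiableAt (Ioc_mem_nhds hr.1 hr.2)).hasDerivAt
  exact h.congr_deriv (by linarith [d.xi_ode r hr])

lemma hasDerivAt_deriv_zeta (d : GreenData N) {r : ℝ} (hr : r ∈ Ioo (0:ℝ) 1) :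
    HasDerivAt (deriv d.zeta) (d.zeta r - ((N : ℝ) - 1) / r * deriv d.zeta r) r := by
  have h := ((d.contDiffOn_deriv_zeta.differentiableOn (by norm_num) r
    ⟨hr.1, hr.2.le⟩).differentiableAt (Ioc_mem_nhds hr.1 hr.2)).hasDerivAt
  exact h.congr_deriv (by linarith [d.zeta_ode r hr])

/-- `deriv ξ 0 = 0` could be a junk value, so the one-sided statement is derived from the equation:
`r ξ''(r) → 0` as `ξ''` is bounded near `0`, while `r ξ'' = r ξ - (N-1) ξ' → -(N-1) ξ'(0⁺)`. -/
lemma derivWithin_xi_zero (hN : 3 ≤ N) (d : GreenData N) :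
    derivWithin d.xi (Icc 0 1) 0 = 0 := by
  set X := derivWithin d.xi (Icc 0 1) with hX
  have hXc := d.contDiffOn_derivWithin_xi
  have hYc : ContinuousOn (derivWithin X (Icc 0 1)) (Icc 0 1) :=
    hXc.continuousOn_derivWithin (uniqueDiffOn_Icc zero_lt_one) le_rfl
  have h0 : (0:ℝ) ∈ Icc (0:ℝ) 1 := by simp
  have hsub := Ioo_subset_Icc_self (a := (0:ℝ)) (b := 1)
  have hid : Tendsto (fun r : ℝ => r) (𝓝[Ioo (0:ℝ) 1] 0) (𝓝 0) := tendsto_nhdsWithin_of_tendsto_nhds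
    tendsto_id
  have l1 : Tendsto (fun r => r * derivWithin X (Icc 0 1) r) (𝓝[Ioo (0:ℝ) 1] 0)
      (𝓝 (0 * derivWithin X (Icc 0 1) 0)) :=
    hid.mul ((hYc 0 h0).mono hsub).tendsto
  have l2 : Tendsto (fun r => r * d.xi r - ((N:ℝ) - 1) * X r) (𝓝[Ioo (0:ℝ) 1] 0)
      (𝓝 (0 * d.xi 0 - ((N:ℝ) - 1) * X 0)) :=
    (hid.mul ((d.xi_smooth.continuousOn 0 h0).mono hsub).tendsto).sub
      (((hXc.continuousOn 0 h0).mono hsub).tendsto.const_mul _)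
  have heq : (fun r => r * derivWithin X (Icc 0 1) r) =ᶠ[𝓝[Ioo (0:ℝ) 1] 0]
      (fun r => r * d.xi r - ((N:ℝ) - 1) * X r) := by
    filter_upwards [self_mem_nhdsWithin] with r hr
    have e : X =ᶠ[𝓝 r] deriv d.xi := by
      filter_upwards [Ioo_mem_nhds hr.1 hr.2] with t ht
      exact d.derivWithin_xi_eq ⟨ht.1, ht.2.le⟩
    rw [derivWithin_of_mem_nhds (Icc_mem_nhds hr.1 hr.2), e.deriv_eq,
      (d.hasDerivAt_deriv_xi hr).deriv, e.eq_of_nhds]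
    have := hr.1.ne'
    field_simp
  have : (𝓝[Ioo (0:ℝ) 1] 0).NeBot := by
    rw [← mem_closure_iff_nhdsWithin_neBot, closure_Ioo (by norm_num)]
    simp
  have h := tendsto_nhds_unique (l1.congr' heq) l2
  have hN' : (3:ℝ) ≤ N := by exact_mod_cast hN
  have h' : ((N:ℝ) - 1) * X 0 = 0 := by linarith
  exact (mul_eq_zero.1 h').resolve_left (by linarith)

/-! ### Signs of `ξ'` and `ζ'` -/

lemma hasDerivAt_pow_mul (hN : 3 ≤ N) {u v : ℝ → ℝ} {r : ℝ} (hr : 0 < r)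
    (h : HasDerivAt v (u r - ((N : ℝ) - 1) / r * v r) r) :
    HasDerivAt (fun r => r ^ (N - 1) * v r) (r ^ (N - 1) * u r) r := by
  refine ((hasDerivAt_pow (N - 1) r).mul h).congr_deriv ?_
  obtain ⟨n, rfl⟩ : ∃ n, N = n + 2 := ⟨N - 2, by omega⟩
  have := hr.ne'
  simp only [show n + 2 - 1 = n + 1 by omega, Nat.add_sub_cancel]
  push_cast
  field_simp
  ring

lemma strictMonoOn_pow_mul (hN : 3 ≤ N) {u v : ℝ → ℝ} (hc : ContinuousOn v (Ioc 0 1))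
    (hu : ∀ r ∈ Ioc (0:ℝ) 1, 0 < u r)
    (h : ∀ r ∈ Ioo (0:ℝ) 1, HasDerivAt v (u r - ((N : ℝ) - 1) / r * v r) r) :
    StrictMonoOn (fun r => r ^ (N - 1) * v r) (Ioc 0 1) := by
  refine strictMonoOn_of_deriv_pos (convex_Ioc 0 1)
    (ContinuousOn.fun_mul (continuous_pow _).continuousOn hc) ?_
  intro r hr
  rw [interior_Ioc] at hr
  rw [(hasDerivAt_pow_mul hN hr.1 (h r hr)).deriv]
  have := hu r ⟨hr.1, hr.2.le⟩
  have := hr.1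
  positivity

lemma strictMonoOn_flux_xi (hN : 3 ≤ N) (d : GreenData N) :
    StrictMonoOn (fun r => r ^ (N - 1) * deriv d.xi r) (Ioc 0 1) :=
  strictMonoOn_pow_mul hN d.contDiffOn_deriv_xi.continuousOn
    (fun r hr => d.xi_pos r ⟨hr.1.le, hr.2⟩) fun _ hr => d.hasDerivAt_deriv_xi hr

lemma strictMonoOn_flux_zeta (hN : 3 ≤ N) (d : GreenData N) :
    StrictMonoOn (fun r => r ^ (N - 1) * deriv d.zeta r) (Ioc 0 1) :=
  strictMonoOn_pow_mul hN d.contDiffOn_deriv_zeta.continuousOn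
    d.zeta_pos fun _ hr => d.hasDerivAt_deriv_zeta hr

lemma deriv_xi_pos (hN : 3 ≤ N) (d : GreenData N) {r : ℝ} (hr : r ∈ Ioc (0:ℝ) 1) :
    0 < deriv d.xi r := by
  have hr2 : r / 2 ∈ Ioc (0:ℝ) 1 := ⟨by linarith [hr.1], by linarith [hr.1, hr.2]⟩
  have h1 : 0 ≤ deriv d.xi (r / 2) := by
    rw [← d.derivWithin_xi_eq hr2]
    exact d.xi_mono.monotoneOn.derivWithin_nonneg
  have h2 := d.strictMonoOn_flux_xi hN hr2 hr (by linarith [hr.1])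
  have h3 : 0 ≤ (r / 2) ^ (N - 1) * deriv d.xi (r / 2) :=
    mul_nonneg (pow_nonneg hr2.1.le _) h1
  exact pos_of_mul_pos_right (h3.trans_lt h2) (pow_nonneg hr.1.le _)

lemma deriv_zeta_neg (hN : 3 ≤ N) (d : GreenData N) {r : ℝ} (hr : r ∈ Ioo (0:ℝ) 1) :
    deriv d.zeta r < 0 := by
  have h2 := d.strictMonoOn_flux_zeta hN ⟨hr.1, hr.2.le⟩ (by simp : (1:ℝ) ∈ Ioc (0:ℝ) 1) hr.2
  simp only [d.zeta_deriv_one, mul_zero] at h2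
  exact neg_of_mul_neg_right h2 (pow_nonneg hr.1.le _)

lemma deriv_zeta_nonpos (hN : 3 ≤ N) (d : GreenData N) {r : ℝ} (hr : r ∈ Ioc (0:ℝ) 1) :
    deriv d.zeta r ≤ 0 := by
  rcases hr.2.lt_or_eq with h | rfl
  · exact (d.deriv_zeta_neg hN ⟨hr.1, h⟩).le
  · exact d.zeta_deriv_one.le

/-- The radicand normalizing `ξ_{[a,b]}` and `ζ_{[a,b]}` is positive. -/
lemma radicand_pos (hN : 3 ≤ N) (d : GreenData N) {a b : ℝ} (ha : 0 < a) (hab : a < b)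
    (hb : b ≤ 1) : 0 < deriv d.xi a * deriv d.zeta b - deriv d.xi b * deriv d.zeta a := by
  have ha' : a ∈ Ioc (0:ℝ) 1 := ⟨ha, hab.le.trans hb⟩
  have hb' : b ∈ Ioc (0:ℝ) 1 := ⟨ha.trans hab, hb⟩
  have hx := d.strictMonoOn_flux_xi hN ha' hb' hab
  have hz := d.strictMonoOn_flux_zeta hN ha' hb' hab
  have pa : 0 < a ^ (N - 1) := pow_pos ha _
  have pb : 0 < b ^ (N - 1) := pow_pos hb'.1 _
  have hxa := mul_pos pa (d.deriv_xi_pos hN ha')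
  have hza := mul_neg_of_pos_of_neg pa (d.deriv_zeta_neg hN ⟨ha, hab.trans_le hb⟩)
  simp only at hx hz
  have h1 := mul_lt_mul_of_pos_left hz hxa
  have h2 := mul_lt_mul_of_neg_right hx hza
  refine pos_of_mul_pos_right (a := a ^ (N - 1) * b ^ (N - 1)) ?_ (by positivity)
  nlinarith

/-! ### The reflection law as an implicit equation -/

/-- The solution `p ζ - q ξ` of `ℒu = 0`. -/
noncomputable def comb (d : GreenData N) (p q r : ℝ) : ℝ := p * d.zeta r - q * d.xi r

/-- The derivative `p ζ' - q ξ'` of `comb`. -/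
noncomputable def dcomb (d : GreenData N) (p q r : ℝ) : ℝ :=
  p * deriv d.zeta r - q * deriv d.xi r

/-- The function `P'Q + PQ'` of the coefficients `(p, q, p', q')` and the point `s`, where
`P = p ζ - q ξ` and `Q = p' ζ - q' ξ`. -/
noncomputable def reflF (d : GreenData N) (x : (ℝ × ℝ × ℝ × ℝ) × ℝ) : ℝ :=
  d.dcomb x.1.1 x.1.2.1 x.2 * d.comb x.1.2.2.1 x.1.2.2.2 x.2 +
    d.comb x.1.1 x.1.2.1 x.2 * d.dcomb x.1.2.2.1 x.1.2.2.2 x.2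

lemma hasDerivAt_comb (d : GreenData N) (p q : ℝ) {r : ℝ} (hr : r ∈ Ioo (0:ℝ) 1) :
    HasDerivAt (d.comb p q) (d.dcomb p q r) r :=
  ((d.hasDerivAt_zeta hr).const_mul p).sub ((d.hasDerivAt_xi hr).const_mul q)

lemma hasDerivAt_dcomb (d : GreenData N) (p q : ℝ) {r : ℝ} (hr : r ∈ Ioo (0:ℝ) 1) :
    HasDerivAt (d.dcomb p q) (d.comb p q r - ((N : ℝ) - 1) / r * d.dcomb p q r) r := by
  refine (((d.hasDerivAt_deriv_zeta hr).const_mul p).sub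
    ((d.hasDerivAt_deriv_xi hr).const_mul q)).congr_deriv ?_
  simp only [comb, dcomb]
  ring

lemma contDiffAt_reflF (d : GreenData N) {x : (ℝ × ℝ × ℝ × ℝ) × ℝ} (hx : x.2 ∈ Ioo (0:ℝ) 1) :
    ContDiffAt ℝ 1 d.reflF x := by
  have h1 : ContDiffAt ℝ 1 d.xi x.2 :=
    (d.xi_smooth.contDiffAt (Icc_mem_nhds hx.1 hx.2)).of_le (by norm_num)
  have h2 : ContDiffAt ℝ 1 d.zeta x.2 :=
    (d.zeta_smooth.contDiffAt (Ioc_mem_nhds hx.1 hx.2)).of_le (by norm_num)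
  have h3 : ContDiffAt ℝ 1 (deriv d.xi) x.2 :=
    d.contDiffOn_deriv_xi.contDiffAt (Ioc_mem_nhds hx.1 hx.2)
  have h4 : ContDiffAt ℝ 1 (deriv d.zeta) x.2 :=
    d.contDiffOn_deriv_zeta.contDiffAt (Ioc_mem_nhds hx.1 hx.2)
  have k1 := h1.comp x contDiffAt_snd
  have k2 := h2.comp x contDiffAt_snd
  have k3 := h3.comp x contDiffAt_snd
  have k4 := h4.comp x contDiffAt_snd
  simp only [Function.comp_def] at k1 k2 k3 k4
  unfold reflF comb dcomb
  fun_prop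

/-- On the zero set of `F`, the derivative `∂F/∂s` equals `2 (PQ + P'Q')`. -/
lemma hasDerivAt_reflF (d : GreenData N) (θ : ℝ × ℝ × ℝ × ℝ) {s : ℝ} (hs : s ∈ Ioo (0:ℝ) 1)
    (h0 : d.reflF (θ, s) = 0) :
    HasDerivAt (fun t => d.reflF (θ, t))
      (2 * (d.comb θ.1 θ.2.1 s * d.comb θ.2.2.1 θ.2.2.2 s +
        d.dcomb θ.1 θ.2.1 s * d.dcomb θ.2.2.1 θ.2.2.2 s)) s := by
  refine (((d.hasDerivAt_dcomb θ.1 θ.2.1 hs).mul (d.hasDerivAt_comb θ.2.2.1 θ.2.2.2 hs)).add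
    ((d.hasDerivAt_comb θ.1 θ.2.1 hs).mul (d.hasDerivAt_dcomb θ.2.2.1 θ.2.2.2 hs))).congr_deriv ?_
  simp only [reflF] at h0
  linear_combination -((N : ℝ) - 1) / s * h0

lemma reflectionAt_iff (d : GreenData N) {a b s p q p' q' c c' : ℝ}
    (hs : s ∈ Ioo (0:ℝ) 1) (hc : c ≠ 0) (hc' : c' ≠ 0)
    (hx : d.xiI a b = fun r => c * d.comb p q r)
    (hz : d.zetaI a b = fun r => c' * d.comb p' q' r)
    (hP : 0 < d.comb p q s) (hQ : 0 < d.comb p' q' s) :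
    d.ReflectionAt a b s ↔ d.reflF ((p, q, p', q'), s) = 0 := by
  unfold ReflectionAt
  rw [hx, hz, ((d.hasDerivAt_comb p q hs).const_mul c).deriv,
    ((d.hasDerivAt_comb p' q' hs).const_mul c').deriv]
  have := hP.ne'
  have := hQ.ne'
  rw [mul_div_mul_left _ _ hc, mul_div_mul_left _ _ hc', div_add_div _ _ ‹_› ‹_›,
    div_eq_zero_iff, or_iff_left (by positivity)]
  rfl

/-- Dissipation of the energy `P'² - P²` along solutions of `P'' + (N-1)/r P' - P = 0`. -/
lemma energy_neg (hN : 3 ≤ N) {P D : ℝ → ℝ} {a s : ℝ} (ha : 0 ≤ a) (has : a < s)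
    (hP : ContinuousOn P (Icc a s)) (hD : ContinuousOn D (Icc a s))
    (hP' : ∀ r ∈ Ioo a s, HasDerivAt P (D r) r)
    (hD' : ∀ r ∈ Ioo a s, HasDerivAt D (P r - ((N : ℝ) - 1) / r * D r) r)
    (hDa : D a = 0) (hPa : P a ≠ 0) : D s ^ 2 < P s ^ 2 := by
  have hN' : (3:ℝ) ≤ N := by exact_mod_cast hN
  have hder : ∀ r ∈ Ioo a s, HasDerivAt (fun r => D r ^ 2 - P r ^ 2)
      (-(2 * (((N : ℝ) - 1) / r) * D r ^ 2)) r := by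
    intro r hr
    refine (((hD' r hr).pow 2).sub ((hP' r hr).pow 2)).congr_deriv ?_
    push_cast
    ring
  have hanti : AntitoneOn (fun r => D r ^ 2 - P r ^ 2) (Icc a s) := by
    refine antitoneOn_of_deriv_nonpos (convex_Icc a s)
      (ContinuousOn.fun_sub (hD.fun_pow 2) (hP.fun_pow 2)) ?_ ?_
    · rw [interior_Icc]
      exact fun r hr => (hder r hr).differentiableAt.differentiableWithinAt
    · rw [interior_Icc]
      intro r hr
      rw [(hder r hr).deriv]
      have h1 : 0 ≤ ((N : ℝ) - 1) / r := div_nonneg (by linarith) (ha.trans hr.1.le)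
      have : 0 ≤ 2 * (((N : ℝ) - 1) / r) * D r ^ 2 := by positivity
      linarith
  have h := hanti (left_mem_Icc.2 has.le) (right_mem_Icc.2 has.le) has.le
  simp only [hDa] at h
  have : 0 < P a ^ 2 := by positivity
  linarith

/-- Implicit function theorem for the reflection law: a function `σ` that picks the only zero of
`F(θ(x), ·)` in `(A(x), B(x))` is `C¹` at `x₀` if `θ` is and if `Q > 0` and `P'² < P²` at the zero;
the last two conditions give `∂F/∂s ≠ 0`. Differentiability is within `S`, so `S` may
contain boundary points. -/
lemma contDiffWithinAt_of_reflF (d : GreenData N) {V : Type*} [NormedAddCommGroup V]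
    [NormedSpace ℝ V] {S : Set V} {A B σ : V → ℝ} {θ : V → ℝ × ℝ × ℝ × ℝ} {x₀ : V}
    (hθ : ContDiffWithinAt ℝ 1 θ S x₀) (hA : ContinuousWithinAt A S x₀)
    (hB : ContinuousWithinAt B S x₀) (hσ : σ x₀ ∈ Ioo (A x₀) (B x₀))
    (hσ' : σ x₀ ∈ Ioo (0:ℝ) 1) (h0 : d.reflF (θ x₀, σ x₀) = 0)
    (huniq : ∀ x ∈ S, ∀ s ∈ Ioo (A x) (B x), d.reflF (θ x, s) = 0 → s = σ x)
    (hQ : 0 < d.comb (θ x₀).2.2.1 (θ x₀).2.2.2 (σ x₀))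
    (hE : d.dcomb (θ x₀).1 (θ x₀).2.1 (σ x₀) ^ 2 < d.comb (θ x₀).1 (θ x₀).2.1 (σ x₀) ^ 2) :
    ContDiffWithinAt ℝ 1 σ S x₀ := by
  have hF : ContDiffAt ℝ 1 d.reflF (θ x₀, σ x₀) := d.contDiffAt_reflF hσ'
  have hder := d.hasDerivAt_reflF (θ x₀) hσ' h0
  set c := 2 * (d.comb (θ x₀).1 (θ x₀).2.1 (σ x₀) * d.comb (θ x₀).2.2.1 (θ x₀).2.2.2 (σ x₀) +
        d.dcomb (θ x₀).1 (θ x₀).2.1 (σ x₀) * d.dcomb (θ x₀).2.2.1 (θ x₀).2.2.2 (σ x₀)) with hc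
  have hc0 : c ≠ 0 := by
    -- multiplying by `P` and using `P Q' = -P' Q` gives `P c = 2 Q (P² - P'²) > 0`
    intro hcz
    simp only [reflF] at h0
    rw [hc] at hcz
    set P := d.comb (θ x₀).1 (θ x₀).2.1 (σ x₀)
    set P' := d.dcomb (θ x₀).1 (θ x₀).2.1 (σ x₀)
    set Q := d.comb (θ x₀).2.2.1 (θ x₀).2.2.2 (σ x₀)
    set Q' := d.dcomb (θ x₀).2.2.1 (θ x₀).2.2.2 (σ x₀)
    have h1 : Q * (P ^ 2 - P' ^ 2) = 0 := by linear_combination P / 2 * hcz - P' * h0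
    have h2 : 0 < Q * (P ^ 2 - P' ^ 2) := mul_pos hQ (by linarith)
    exact h2.ne' h1
  have hfd : (fderiv ℝ d.reflF (θ x₀, σ x₀)) (0, 1) = c := by
    have hg : HasDerivAt (fun t : ℝ => (θ x₀, t)) ((0 : ℝ × ℝ × ℝ × ℝ), (1:ℝ)) (σ x₀) :=
      (hasDerivAt_const _ _).prodMk (hasDerivAt_id _)
    exact ((hF.differentiableAt (by norm_num)).hasFDerivAt.comp_hasDerivAt (σ x₀) hg).unique hder
  have hinv : (fderiv ℝ d.reflF (θ x₀, σ x₀) ∘L .inr ℝ (ℝ × ℝ × ℝ × ℝ) ℝ).IsInvertible := by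
    refine ⟨ContinuousLinearEquiv.unitsEquivAut ℝ (Units.mk0 c hc0), ?_⟩
    ext
    simp [hfd]
  set φ := hF.implicitFunction (by norm_num) hinv with hφ
  have hφ1 : ContDiffAt ℝ 1 φ (θ x₀) := hF.contDiffAt_implicitFunction (by norm_num) hinv
  have hφ0 : φ (θ x₀) = σ x₀ := hF.implicitFunction_apply_self (by norm_num) hinv
  have hφF : ∀ᶠ y in 𝓝 (θ x₀), d.reflF (y, φ y) = 0 := by
    have := hF.eventually_apply_implicitFunction (by norm_num) hinv
    rwa [h0] at this
  have hcomp : ContDiffWithinAt ℝ 1 (φ ∘ θ) S x₀ := hφ1.comp_contDiffWithinAt x₀ hθ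
  have hlim : Tendsto (φ ∘ θ) (𝓝[S] x₀) (𝓝 (σ x₀)) := by
    have := hcomp.continuousWithinAt.tendsto
    rwa [Function.comp_apply, hφ0] at this
  refine hcomp.congr_of_eventuallyEq ?_ hφ0.symm
  filter_upwards [hθ.continuousWithinAt.tendsto.eventually hφF, hA.tendsto.eventually_lt hlim hσ.1,
    hlim.eventually_lt hB.tendsto hσ.2, self_mem_nhdsWithin] with x h1 h2 h3 h4
  exact (huniq x h4 _ ⟨h2, h3⟩ h1).symm

/-! ### The functions `ξ_{[a,b]}` and `ζ_{[a,b]}` -/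

lemma xiI_eq (hN : 3 ≤ N) (d : GreenData N) {a b : ℝ} (ha : 0 < a) (hab : a < b) (hb : b ≤ 1) :
    ∃ c ≠ 0, d.xiI a b = fun r => c * d.comb (deriv d.xi a) (deriv d.zeta a) r := by
  have hR := (Real.sqrt_pos.2 (d.radicand_pos hN ha hab hb)).ne'
  by_cases h1 : b = 1
  · refine ⟨1, one_ne_zero, ?_⟩
    funext r
    simp only [xiI, ha.ne', h1, comb, if_true, if_false]
    ring
  · refine ⟨_, inv_ne_zero hR, ?_⟩
    funext r
    simp only [xiI, ha.ne', h1, comb, if_false]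
    ring

lemma xiI_zero_eq (hN : 3 ≤ N) (d : GreenData N) {b : ℝ} (hb : b ∈ Ioc (0:ℝ) 1) :
    ∃ c ≠ 0, d.xiI 0 b = fun r => c * d.comb 0 (-1) r := by
  by_cases h1 : b = 1
  · refine ⟨1, one_ne_zero, ?_⟩
    funext r
    simp [xiI, h1, comb]
  · refine ⟨_, inv_ne_zero (d.deriv_xi_pos hN hb).ne', ?_⟩
    funext r
    simp only [xiI, h1, comb, if_true, if_false]
    ring

lemma zetaI_eq (hN : 3 ≤ N) (d : GreenData N) {a b : ℝ} (ha : 0 ≤ a) (hab : a < b) (hb : b ≤ 1) :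
    ∃ c ≠ 0, d.zetaI a b = fun r => c * d.comb (deriv d.xi b) (deriv d.zeta b) r := by
  have hx1 := (d.deriv_xi_pos hN (right_mem_Ioc.2 one_pos)).ne'
  by_cases h0 : a = 0
  · by_cases h1 : b = 1
    · refine ⟨_, inv_ne_zero hx1, ?_⟩
      funext r
      simp only [zetaI, h0, h1, comb, if_true, d.zeta_deriv_one]
      field_simp
      ring
    · refine ⟨1, one_ne_zero, ?_⟩
      funext r
      simp only [zetaI, h0, h1, comb, if_true, if_false]
      ring
  · have ha' : 0 < a := lt_of_le_of_ne ha (Ne.symm h0)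
    by_cases h1 : b = 1
    · have hz := (d.deriv_zeta_neg hN ⟨ha', hab.trans_le hb⟩).ne
      refine ⟨_, neg_ne_zero.2 (inv_ne_zero (mul_ne_zero hx1 hz)), ?_⟩
      funext r
      simp only [zetaI, h0, h1, comb, if_true, if_false, d.zeta_deriv_one]
      field_simp
      ring
    · have hR := (Real.sqrt_pos.2 (d.radicand_pos hN ha' hab hb)).ne'
      refine ⟨_, inv_ne_zero hR, ?_⟩
      funext r
      simp only [zetaI, h0, h1, comb, if_false]
      ring

lemma comb_pos (hN : 3 ≤ N) (d : GreenData N) {b s : ℝ} (hb : b ∈ Ioc (0:ℝ) 1)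
    (hs : s ∈ Ioc (0:ℝ) 1) : 0 < d.comb (deriv d.xi b) (deriv d.zeta b) s := by
  have h1 := mul_pos (d.deriv_xi_pos hN hb) (d.zeta_pos s hs)
  have h2 := mul_nonpos_of_nonpos_of_nonneg (d.deriv_zeta_nonpos hN hb)
    (d.xi_pos s ⟨hs.1.le, hs.2⟩).le
  unfold comb
  linarith

lemma comb_zero_pos (d : GreenData N) {s : ℝ} (hs : s ∈ Ioc (0:ℝ) 1) :
    0 < d.comb 0 (-1) s := by
  simpa [comb] using d.xi_pos s ⟨hs.1.le, hs.2⟩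

lemma energy_comb (hN : 3 ≤ N) (d : GreenData N) {a s : ℝ} (ha : 0 < a) (has : a < s)
    (hs : s < 1) : d.dcomb (deriv d.xi a) (deriv d.zeta a) s ^ 2 <
      d.comb (deriv d.xi a) (deriv d.zeta a) s ^ 2 := by
  have hI : ∀ r ∈ Icc a s, r ∈ Ioo (0:ℝ) 1 := fun r hr =>
    ⟨ha.trans_le hr.1, hr.2.trans_lt hs⟩
  refine energy_neg hN ha.le has
    (fun r hr => (d.hasDerivAt_comb _ _ (hI r hr)).continuousAt.continuousWithinAt)
    (fun r hr => (d.hasDerivAt_dcomb _ _ (hI r hr)).continuousAt.continuousWithinAt)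
    (fun r hr => d.hasDerivAt_comb _ _ (hI r (Ioo_subset_Icc_self hr)))
    (fun r hr => d.hasDerivAt_dcomb _ _ (hI r (Ioo_subset_Icc_self hr))) ?_ ?_
  · simp only [dcomb]
    ring
  · have h : a ∈ Ioc (0:ℝ) 1 := ⟨ha, (has.trans hs).le⟩
    exact (d.comb_pos hN h h).ne'

lemma energy_comb_zero (hN : 3 ≤ N) (d : GreenData N) {s : ℝ} (hs : s ∈ Ioo (0:ℝ) 1) :
    d.dcomb 0 (-1) s ^ 2 < d.comb 0 (-1) s ^ 2 := by
  have hsub : Icc 0 s ⊆ Icc (0:ℝ) 1 := Icc_subset_Icc_right hs.2.le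
  have h := energy_neg (P := d.xi) (D := derivWithin d.xi (Icc 0 1)) hN le_rfl hs.1
    (d.xi_smooth.continuousOn.mono hsub) (d.contDiffOn_derivWithin_xi.continuousOn.mono hsub)
    ?_ ?_ (d.derivWithin_xi_zero hN) (d.xi_pos 0 (by simp)).ne'
  · rw [d.derivWithin_xi_eq ⟨hs.1, hs.2.le⟩] at h
    simpa [comb, dcomb] using h
  · intro r hr
    rw [d.derivWithin_xi_eq ⟨hr.1, (hr.2.trans hs.2).le⟩]
    exact d.hasDerivAt_xi ⟨hr.1, hr.2.trans hs.2⟩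
  · intro r hr
    rw [d.derivWithin_xi_eq ⟨hr.1, (hr.2.trans hs.2).le⟩]
    refine (d.hasDerivAt_deriv_xi ⟨hr.1, hr.2.trans hs.2⟩).congr_of_eventuallyEq ?_
    filter_upwards [Ioo_mem_nhds hr.1 (hr.2.trans hs.2)] with t ht
    exact d.derivWithin_xi_eq ⟨ht.1, ht.2.le⟩

end GreenData


theorem statement5 {N : ℕ} (hN : 3 ≤ N) (d : GreenData N)
    (sbar : ℝ → ℝ → ℝ) (hsbar : IsSBar d sbar) :
    ContDiffOn ℝ 1 (fun q : ℝ × ℝ => sbar q.1 q.2)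
      {q : ℝ × ℝ | 0 < q.1 ∧ q.1 < 1 ∧ q.1 < q.2 ∧ q.2 ≤ 1} ∧
    ContDiffOn ℝ 1 (fun b : ℝ => sbar 0 b) (Set.Ioc 0 1) := by
  constructor
  · rintro ⟨a, b⟩ hq
    have key : ∀ a b : ℝ, 0 < a → a < b → b ≤ 1 → ∀ s ∈ Ioo a b, (d.ReflectionAt a b s ↔
        d.reflF ((deriv d.xi a, deriv d.zeta a, deriv d.xi b, deriv d.zeta b), s) = 0) := by
      intro a b ha hab hb s hs
      obtain ⟨c, hc, hx⟩ := d.xiI_eq hN ha hab hb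
      obtain ⟨c', hc', hz⟩ := d.zetaI_eq hN ha.le hab hb
      have hs' : s ∈ Ioc (0:ℝ) 1 := ⟨ha.trans hs.1, hs.2.le.trans hb⟩
      exact d.reflectionAt_iff ⟨hs'.1, hs.2.trans_le hb⟩ hc hc' hx hz
        (d.comb_pos hN ⟨ha, hab.le.trans hb⟩ hs') (d.comb_pos hN ⟨ha.trans hab, hb⟩ hs')
    obtain ⟨ha, ha1, hab, hb⟩ := hq
    simp only at ha ha1 hab hb
    obtain ⟨hmem, hrefl, -⟩ := hsbar a b ha.le hab hb
    have hs' : sbar a b ∈ Ioo (0:ℝ) 1 := ⟨ha.trans hmem.1, hmem.2.trans_le hb⟩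
    have hmaps1 : MapsTo Prod.fst {q : ℝ × ℝ | 0 < q.1 ∧ q.1 < 1 ∧ q.1 < q.2 ∧ q.2 ≤ 1}
        (Ioc (0:ℝ) 1) := fun q hq => ⟨hq.1, hq.2.1.le⟩
    have hmaps2 : MapsTo Prod.snd {q : ℝ × ℝ | 0 < q.1 ∧ q.1 < 1 ∧ q.1 < q.2 ∧ q.2 ≤ 1}
        (Ioc (0:ℝ) 1) := fun q hq => ⟨hq.1.trans hq.2.2.1, hq.2.2.2⟩
    refine d.contDiffWithinAt_of_reflF (A := Prod.fst) (B := Prod.snd)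
      (σ := fun q : ℝ × ℝ => sbar q.1 q.2)
      (θ := fun q => (deriv d.xi q.1, deriv d.zeta q.1, deriv d.xi q.2, deriv d.zeta q.2))
      ?_ continuous_fst.continuousWithinAt continuous_snd.continuousWithinAt
      hmem hs' ((key a b ha hab hb _ hmem).1 hrefl) ?_
      (d.comb_pos hN ⟨ha.trans hab, hb⟩ ⟨hs'.1, hs'.2.le⟩)
      (d.energy_comb hN ha hmem.1 hs'.2)
    · exact (((d.contDiffOn_deriv_xi.comp contDiffOn_fst hmaps1).prodMk
        ((d.contDiffOn_deriv_zeta.comp contDiffOn_fst hmaps1).prodMk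
          ((d.contDiffOn_deriv_xi.comp contDiffOn_snd hmaps2).prodMk
            (d.contDiffOn_deriv_zeta.comp contDiffOn_snd hmaps2)))) : ContDiffOn ℝ 1 _ _)
        (a, b) ⟨ha, ha1, hab, hb⟩
    · rintro ⟨a', b'⟩ ⟨h1, h2, h3, h4⟩ s hs h
      exact (hsbar a' b' h1.le h3 h4).2.2 s hs ((key a' b' h1 h3 h4 s hs).2 h)
  · intro b hb
    have key : ∀ b ∈ Ioc (0:ℝ) 1, ∀ s ∈ Ioo 0 b, (d.ReflectionAt 0 b s ↔
        d.reflF ((0, -1, deriv d.xi b, deriv d.zeta b), s) = 0) := by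
      intro b hb s hs
      obtain ⟨c, hc, hx⟩ := d.xiI_zero_eq hN hb
      obtain ⟨c', hc', hz⟩ := d.zetaI_eq hN le_rfl hb.1 hb.2
      have hs' : s ∈ Ioc (0:ℝ) 1 := ⟨hs.1, hs.2.le.trans hb.2⟩
      exact d.reflectionAt_iff ⟨hs.1, hs.2.trans_le hb.2⟩ hc hc' hx hz
        (d.comb_zero_pos hs') (d.comb_pos hN hb hs')
    obtain ⟨hmem, hrefl, -⟩ := hsbar 0 b le_rfl hb.1 hb.2
    have hs' : sbar 0 b ∈ Ioo (0:ℝ) 1 := ⟨hmem.1, hmem.2.trans_le hb.2⟩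
    refine d.contDiffWithinAt_of_reflF (A := fun _ => 0) (B := fun b => b)
      (σ := fun b : ℝ => sbar 0 b)
      (θ := fun b => (0, -1, deriv d.xi b, deriv d.zeta b))
      ?_ continuousWithinAt_const continuousWithinAt_id
      hmem hs' ((key b hb _ hmem).1 hrefl) ?_
      (d.comb_pos hN hb ⟨hs'.1, hs'.2.le⟩)
      (d.energy_comb_zero hN hs')
    · exact contDiffWithinAt_const.prodMk (contDiffWithinAt_const.prodMk
        ((d.contDiffOn_deriv_xi b hb).prodMk (d.contDiffOn_deriv_zeta b hb)))
    · intro b' hb' s hs h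
      exact (hsbar 0 b' le_rfl hb'.1 hb'.2).2.2 s hs ((key b' hb' s hs).2 h)
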